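/- Let T be a finite-dimensional nilpotent Lie algebra over a field F of nilpotency class 3 with dim [T,T] = 2 such that T is stem (i.e. Z(T) ⊆ [T,T]). Then T is not capable if and only if dim T ≥ 6. -/

import Mathlib

open Module

universe u

/-- A witness to the capability of a Lie algebra `L` over `F`: a Lie algebra `E`
together with an isomorphism `L ≃ E ⧸ Z(E)`. -/
structure CapableWitness (F : Type u) (L : Type u) [Field F] [LieRing L] [LieAlgebra F L] where
  carrier : Type u
  [lieRing : LieRing carrier]
  [lieAlgebra : LieAlgebra F carrier]
  equiv : L ≃ₗ⁅F⁆ (carrier ⧸ LieAlgebra.center F carrier)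

/-- A Lie algebra `L` over a field `F` is capable if there exists a Lie algebra `E` over `F`
with `L ≅ E ⧸ Z(E)`. -/
def IsCapable (F : Type u) (L : Type u) [Field F] [LieRing L] [LieAlgebra F L] : Prop :=
  Nonempty (CapableWitness F L)

/-!
A Lie algebra is capable iff some 2-cocycle `f` with trivial coefficients satisfies `f x ≠ 0` for
every nonzero central `x`.

A stem algebra `T` of class 3 with a two-dimensional derived subalgebra has elements `a`, `b` with
`⁅T, T⁆ = ⟨c, z⟩`, where `c = ⁅a, b⁆`, `z = ⁅a, c⁆` spans the center and `⁅b, c⁆ = 0`. Let `K` be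
the centralizer of `{a, c}`; then `T = ⟨a, b, c⟩ ⊕ K`.

If `K` is abelian, every bracket is determined by the coordinate forms `α`, `β`, `γ` dual to
`a`, `b`, `c` and by the `z`-component `δ` of `ad b`, so these four forms vanish together only on
the center and `dim T ≤ 5`. The cocycle `α ∧ ζ + γ ∧ δ`, with `ζ` dual to `z`, does not
kill `z`, so `T` is capable.

If `x, y ∈ K` do not commute, then `a, b, c, x, y, z` are independent and `dim T ≥ 6`. As `z` is a
multiple of `⁅x, y⁆`, every cocycle kills `z` against whatever commutes with `x` and `y`, in
particular against `a` and `c`; writing `z = ⁅a, c⁆` extends this to all of `T`, so `T` is not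
capable.
-/

open Function LieModule LieModule.Cohomology

section Capability

variable {F L : Type u} [Field F] [LieRing L] [LieAlgebra F L]

theorem isCapable_iff_exists_surjective :
    IsCapable F L ↔ ∃ (E : Type u) (_ : LieRing E) (_ : LieAlgebra F E) (p : E →ₗ⁅F⁆ L),
      Surjective p ∧ p.ker = LieAlgebra.center F E := by
  constructor
  · rintro ⟨⟨E, e⟩⟩
    let q : E →ₗ⁅F⁆ E ⧸ LieAlgebra.center F E :=
      { (LieSubmodule.Quotient.mk' (LieAlgebra.center F E) : E →ₗ[F] _) with
        map_lie' := rfl }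
    have hq : Surjective q := LieSubmodule.Quotient.surjective_mk' _
    refine ⟨E, _, _, e.symm.toLieHom.comp q, e.symm.surjective.comp hq, ?_⟩
    ext x
    exact (map_eq_zero_iff e.symm e.symm.injective).trans
      (LieSubmodule.Quotient.mk_eq_zero (N := LieAlgebra.center F E))
  · rintro ⟨E, _, _, p, hp, hker⟩
    have e : (E ⧸ p.ker) ≃ₗ⁅F⁆ L :=
      p.quotKerEquivRange.trans
        ((LieEquiv.ofEq _ _ (congrArg _ (p.range_eq_top.2 hp))).trans LieSubalgebra.topEquiv)
    rw [hker] at e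
    exact ⟨⟨E, e.symm⟩⟩

theorem isCapable_of_twoCocycle {M : Type u} [AddCommGroup M] [Module F M] [LieRingModule L M]
    [LieModule F L M] [LieModule.IsTrivial L M] (f : twoCocycle F L M)
    (hf : ∀ x ∈ LieAlgebra.center F L, f.1 x = 0 → x = 0) : IsCapable F L := by
  let p : LieAlgebra.ofTwoCocycle f →ₗ⁅F⁆ L :=
    { toFun x := x.carrier.1
      map_add' _ _ := rfl
      map_smul' _ _ := rfl
      map_lie' := rfl }
  have lie_eq (x y : LieAlgebra.ofTwoCocycle f) :
      ⁅x, y⁆ = ⟨(⁅x.carrier.1, y.carrier.1⁆, f.1 x.carrier.1 y.carrier.1)⟩ := by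
    rw [LieAlgebra.bracket_ofTwoCocycle, trivial_lie_zero L M, trivial_lie_zero L M, add_zero,
      sub_zero]
    rfl
  refine isCapable_iff_exists_surjective.2 ⟨_, _, _, p, fun t ↦ ⟨⟨(t, 0)⟩, rfl⟩, ?_⟩
  ext x
  rw [LieHom.mem_ker, mem_maxTrivSubmodule]
  constructor
  · intro (hx : x.carrier.1 = 0) y
    rw [lie_eq, hx, lie_zero, map_zero]
    rfl
  · intro hx
    have hlie (y : L) : (⁅y, x.carrier.1⁆, f.1 y x.carrier.1) = (0 : L × M) :=
      congrArg LieAlgebra.ofTwoCocycle.carrier ((lie_eq ⟨(y, 0)⟩ x).symm.trans (hx _))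
    refine hf _ ((mem_maxTrivSubmodule F L L _).2 fun y ↦ congrArg Prod.fst (hlie y)) ?_
    ext y
    exact (twoCochain_skew f.1 y x.carrier.1).symm.trans
      (neg_eq_zero.2 (congrArg Prod.snd (hlie y)))

theorem IsCapable.exists_twoCocycle (h : IsCapable F L) :
    ∃ (M : Type u) (_ : AddCommGroup M) (_ : Module F M)
      (f : twoCocycle F L (TrivialLieModule F L M)), ∀ x, f.1 x = 0 → x = 0 := by
  obtain ⟨E, _, _, p, hp, hker⟩ := isCapable_iff_exists_surjective.1 h
  obtain ⟨s, hs⟩ := (p : E →ₗ[F] L).exists_rightInverse_of_surjective (LinearMap.range_eq_top.2 hp)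
  replace hs (x : L) : p (s x) = x := LinearMap.congr_fun hs x
  have lie_eq_of_map_eq {u v : E} (huv : p u = p v) (w : E) : ⁅w, u⁆ = ⁅w, v⁆ := by
    have : u - v ∈ LieAlgebra.center F E := by simp [← hker, huv]
    rw [← sub_eq_zero, ← lie_sub, (mem_maxTrivSubmodule F E E _).1 this]
  let f : L →ₗ[F] L →ₗ[F] E := (toEnd F E E : E →ₗ[F] End F E).compl₁₂ s s
  refine ⟨E, _, _, ⟨⟨f, fun x ↦ lie_self (s x)⟩, ?_⟩, fun x hx ↦ ?_⟩
  · rw [mem_twoCocycle_iff_of_trivial]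
    intro x y z
    change ⁅s x, s ⁅y, z⁆⁆ = ⁅s ⁅x, y⁆, s z⁆ + ⁅s y, s ⁅x, z⁆⁆
    have lie_s_lie (u v w : L) : ⁅s u, s ⁅v, w⁆⁆ = ⁅s u, ⁅s v, s w⁆⁆ :=
      lie_eq_of_map_eq (by simp only [hs, LieHom.map_lie]) _
    rw [← lie_skew (s ⁅x, y⁆), lie_s_lie, lie_s_lie, lie_s_lie, lie_skew, leibniz_lie]
  · have hsx : s x ∈ LieAlgebra.center F E := by
      rw [mem_maxTrivSubmodule]
      intro u
      rw [← lie_skew, lie_eq_of_map_eq (hs (p u)).symm]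
      exact neg_eq_zero.2 (LinearMap.congr_fun hx (p u))
    rw [← hs x]
    exact LieHom.mem_ker.1 (hker ▸ hsx)

end Capability

theorem twoCocycle_apply_lie_eq_zero {R L M : Type*} [CommRing R] [LieRing L] [LieAlgebra R L]
    [AddCommGroup M] [Module R M] [LieRingModule L M] [LieModule R L M] [LieModule.IsTrivial L M]
    (f : twoCocycle R L M) {w x y : L} (hx : ⁅w, x⁆ = 0) (hy : ⁅w, y⁆ = 0) : f.1 w ⁅x, y⁆ = 0 := by
  rw [(mem_twoCocycle_iff_of_trivial _ _ _ _).1 f.2, hx, hy, map_zero, map_zero,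
    LinearMap.zero_apply, add_zero]

section LowerCentralSeries

variable {R L M : Type*} [CommRing R] [LieRing L] [LieAlgebra R L] [AddCommGroup M] [Module R M]
  [LieRingModule L M]

theorem lowerCentralSeries_succ_eq_bot_iff {k : ℕ} :
    lowerCentralSeries R L M (k + 1) = ⊥ ↔
      ∀ x : L, ∀ m ∈ lowerCentralSeries R L M k, ⁅x, m⁆ = 0 := by
  rw [lowerCentralSeries_succ, LieSubmodule.lie_eq_bot_iff]
  simp only [LieSubmodule.mem_top, true_imp_iff]

theorem lie_lie_eq_zero_of_mem_lowerCentralSeries {k : ℕ}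
    (h : lowerCentralSeries R L M (k + 2) = ⊥) (x y : L) {m : M}
    (hm : m ∈ lowerCentralSeries R L M k) : ⁅x, ⁅y, m⁆⁆ = 0 := by
  refine lowerCentralSeries_succ_eq_bot_iff.1 h x _ ?_
  rw [lowerCentralSeries_succ]
  exact LieSubmodule.lie_mem_lie (LieSubmodule.mem_top y) hm

theorem lie_mem_lowerCentralSeries_one (x y : L) : ⁅x, y⁆ ∈ lowerCentralSeries R L L 1 := by
  rw [lowerCentralSeries_succ]
  exact LieSubmodule.lie_mem_lie (LieSubmodule.mem_top x) (LieSubmodule.mem_top y)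

theorem lowerCentralSeries_one_le_iff {N : Submodule R L} :
    (lowerCentralSeries R L L 1).toSubmodule ≤ N ↔ ∀ x y : L, ⁅x, y⁆ ∈ N := by
  rw [lowerCentralSeries_succ, LieSubmodule.lieIdeal_oper_eq_linear_span', Submodule.span_le]
  constructor
  · exact fun h x y ↦ h ⟨x, LieSubmodule.mem_top x, y, LieSubmodule.mem_top y, rfl⟩
  · rintro h _ ⟨x, -, y, -, rfl⟩
    exact h x y

end LowerCentralSeries

section Centralizer

variable {R L : Type*} [CommRing R] [LieRing L] [LieAlgebra R L]

variable (R) in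
/-- The centralizer of a subset of a Lie algebra. -/
def lieCentralizer (s : Set L) : LieSubalgebra R L where
  carrier := {x | ∀ y ∈ s, ⁅y, x⁆ = 0}
  add_mem' hx hy u hu := by rw [lie_add, hx u hu, hy u hu, add_zero]
  zero_mem' u _ := lie_zero u
  smul_mem' k x hx u hu := by rw [lie_smul, hx u hu, smul_zero]
  lie_mem' hx hy u hu := by rw [leibniz_lie, hx u hu, hy u hu, zero_lie, lie_zero, add_zero]

theorem mem_lieCentralizer_pair {x y t : L} :
    t ∈ lieCentralizer R {x, y} ↔ ⁅x, t⁆ = 0 ∧ ⁅y, t⁆ = 0 := by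
  change (∀ u ∈ ({x, y} : Set L), ⁅u, t⁆ = 0) ↔ _
  simp

theorem isLieAbelian_subalgebra_iff {K : LieSubalgebra R L} :
    IsLieAbelian K ↔ ∀ x ∈ K, ∀ y ∈ K, ⁅x, y⁆ = 0 :=
  ⟨fun _ x hx y hy ↦ congrArg Subtype.val (trivial_lie_zero K K ⟨x, hx⟩ ⟨y, hy⟩),
    fun h ↦ ⟨fun x y ↦ Subtype.ext (h x x.2 y y.2)⟩⟩

end Centralizer

/-- The exterior product of two linear forms, as an alternating bilinear form. -/
def wedge {R M : Type*} [CommRing R] [AddCommGroup M] [Module R M] (φ ψ : Dual R M) :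
    M →ₗ[R] M →ₗ[R] R :=
  φ.smulRight ψ - ψ.smulRight φ

@[simp]
theorem wedge_apply {R M : Type*} [CommRing R] [AddCommGroup M] [Module R M] (φ ψ : Dual R M)
    (x y : M) : wedge φ ψ x y = φ x * ψ y - ψ x * φ y :=
  rfl

theorem eq_span_pair_of_apply_apply_eq_zero {K V : Type*} [Field K] [AddCommGroup V] [Module K V]
    {N : Submodule K V} (hN : finrank K N = 2) {g : End K V} {v : V} (hv : v ∈ N) (hgv : g v ∈ N)
    (hne : g v ≠ 0) (hzero : g (g v) = 0) : N = Submodule.span K {v, g v} := by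
  have hind : LinearIndependent K ![v, g v] := by
    rw [LinearIndependent.pair_iff]
    intro s t hst
    have hs : s = 0 := by simpa [hzero, hne] using congrArg g hst
    exact ⟨hs, by simpa [hs, hne] using hst⟩
  have hle : Submodule.span K {v, g v} ≤ N := Submodule.span_le.2 (Set.pair_subset hv hgv)
  have : FiniteDimensional K N := FiniteDimensional.of_finrank_pos (by omega)
  refine (Submodule.eq_of_le_of_finrank_eq hle ?_).symm
  rw [hN, ← Matrix.range_cons_cons_empty, finrank_span_eq_card hind, Fintype.card_fin]

theorem exists_lie_sub_smul_eq_zero {F T : Type*} [Field F] [LieRing T] [LieAlgebra F T]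
    (h : lowerCentralSeries F T T 3 = ⊥) (hder : finrank F (lowerCentralSeries F T T 1) = 2)
    {a s : T} (hs : s ∈ lowerCentralSeries F T T 1) (has : ⁅a, s⁆ ≠ 0) (x : T) :
    ∃ k : F, ∀ t ∈ lowerCentralSeries F T T 1, ⁅x - k • a, t⁆ = 0 := by
  have hspan : (lowerCentralSeries F T T 1).toSubmodule = Submodule.span F {s, ⁅a, s⁆} :=
    eq_span_pair_of_apply_apply_eq_zero (g := LieAlgebra.ad F T a) hder hs
      (lie_mem_lowerCentralSeries_one a s) has
      (lie_lie_eq_zero_of_mem_lowerCentralSeries h a a hs)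
  have lie_lie_s (u v : T) : ⁅u, ⁅v, s⁆⁆ = 0 := lie_lie_eq_zero_of_mem_lowerCentralSeries h u v hs
  obtain ⟨p, k, hpk⟩ := Submodule.mem_span_pair.1
    (hspan.le (lie_mem_lowerCentralSeries_one x s))
  have hp : p = 0 := by
    have : p • ⁅a, s⁆ = 0 := by simpa [← hpk, lie_lie_s] using lie_lie_s a x
    exact (smul_eq_zero.1 this).resolve_right has
  refine ⟨k, fun t ht ↦ ?_⟩
  obtain ⟨i, j, rfl⟩ := Submodule.mem_span_pair.1 (hspan.le ht)
  simp [lie_lie_s, ← hpk, hp]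

theorem exists_lie_lie_ne_zero {R L : Type*} [CommRing R] [LieRing L] [LieAlgebra R L] {a s : L}
    (hs : s ∈ lowerCentralSeries R L L 1) (has : ⁅a, s⁆ ≠ 0)
    (ha : ∀ x : L, ∃ k : R, ∀ t ∈ lowerCentralSeries R L L 1, ⁅x - k • a, t⁆ = 0) :
    ∃ b : L, (∀ t ∈ lowerCentralSeries R L L 1, ⁅b, t⁆ = 0) ∧ ⁅a, ⁅a, b⁆⁆ ≠ 0 := by
  suffices ∃ y : L, ⁅a, ⁅a, y⁆⁆ ≠ 0 by
    obtain ⟨y, hy⟩ := this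
    obtain ⟨k, hk⟩ := ha y
    exact ⟨y - k • a, hk, by simpa using hy⟩
  by_contra! hzero
  have lie_lie_a (x y : L) : ⁅x, ⁅a, y⁆⁆ = 0 := by
    obtain ⟨k, hk⟩ := ha x
    simpa [hzero] using hk _ (lie_mem_lowerCentralSeries_one a y)
  have hle : (lowerCentralSeries R L L 1).toSubmodule ≤ LinearMap.ker (LieAlgebra.ad R L a) := by
    refine lowerCentralSeries_one_le_iff.2 fun x y ↦ ?_
    change ⁅a, ⁅x, y⁆⁆ = 0
    rw [leibniz_lie, ← lie_skew, lie_lie_a, lie_lie_a, neg_zero, add_zero]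
  exact has (hle hs)

/-- Elements `a`, `b`, `c = ⁅a, b⁆` and a central `z = ⁅a, c⁆` of a Lie algebra whose derived
subalgebra is the plane spanned by `c` and `z`, with a linear form `ζ` reading off the `z`-component
in that plane. -/
structure AdaptedFrame (F T : Type*) [Field F] [LieRing T] [LieAlgebra F T] where
  (a b c z : T)
  ζ : Dual F T
  lie_a_b : ⁅a, b⁆ = c
  lie_a_c : ⁅a, c⁆ = z
  lie_b_c : ⁅b, c⁆ = 0
  lie_z (x : T) : ⁅x, z⁆ = 0
  ζ_c : ζ c = 0
  ζ_z : ζ z = 1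
  derived_le_span : (lowerCentralSeries F T T 1).toSubmodule ≤ Submodule.span F {c, z}

namespace AdaptedFrame

attribute [simp] lie_a_b lie_a_c lie_b_c lie_z ζ_c ζ_z

section Existence

variable {F T : Type*} [Field F] [LieRing T] [LieAlgebra F T]

theorem nonempty (h₂ : lowerCentralSeries F T T 2 ≠ ⊥) (h₃ : lowerCentralSeries F T T 3 = ⊥)
    (hder : finrank F (lowerCentralSeries F T T 1) = 2) : Nonempty (AdaptedFrame F T) := by
  obtain ⟨a, s, hs, has⟩ : ∃ a : T, ∃ s ∈ lowerCentralSeries F T T 1, ⁅a, s⁆ ≠ 0 := by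
    by_contra! h
    exact h₂ (lowerCentralSeries_succ_eq_bot_iff.2 h)
  obtain ⟨b, hb, hab⟩ := exists_lie_lie_ne_zero hs has (exists_lie_sub_smul_eq_zero h₃ hder hs has)
  have hc : ⁅a, b⁆ ∈ lowerCentralSeries F T T 1 := lie_mem_lowerCentralSeries_one a b
  have hz (x : T) : ⁅x, ⁅a, ⁅a, b⁆⁆⁆ = 0 := lie_lie_eq_zero_of_mem_lowerCentralSeries h₃ x a hc
  have hne : ⁅a, ⁅a, b⁆⁆ ∉ Submodule.span F {⁅a, b⁆} := by
    intro hmem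
    obtain ⟨k, hk⟩ := Submodule.mem_span_singleton.1 hmem
    have : k • ⁅a, ⁅a, b⁆⁆ = 0 := by rw [← lie_smul, hk, hz]
    exact hab (by rw [← hk, (smul_eq_zero.1 this).resolve_right hab, zero_smul])
  obtain ⟨ζ, hζ, hζz⟩ := LinearMap.exists_extend_of_notMem (0 : _ →ₗ[F] F) hne 1
  exact ⟨{
    a := a, b := b, c := ⁅a, b⁆, z := ⁅a, ⁅a, b⁆⁆, ζ := ζ
    lie_a_b := rfl
    lie_a_c := rfl
    lie_b_c := hb _ hc
    lie_z := hz
    ζ_c := LinearMap.congr_fun hζ ⟨_, Submodule.mem_span_singleton_self _⟩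
    ζ_z := hζz
    derived_le_span := (eq_span_pair_of_apply_apply_eq_zero (g := LieAlgebra.ad F T a) hder hc
      (lie_mem_lowerCentralSeries_one a _) hab (hz a)).le }⟩

end Existence

section Forms

variable {F T : Type*} [Field F] [LieRing T] [LieAlgebra F T] (S : AdaptedFrame F T)

/-- The linear form dual to `c`, read off from `⁅a, x⁆ = β x • c + γ x • z`. -/
def γ : Dual F T := S.ζ ∘ₗ LieAlgebra.ad F T S.a

/-- The linear form dual to `b`, read off from `⁅a, x⁆ = β x • c + γ x • z`. -/
def β : Dual F T := S.γ ∘ₗ LieAlgebra.ad F T S.a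

/-- The `z`-component of `ad b`, which vanishes on the frame. -/
def δ : Dual F T := S.ζ ∘ₗ LieAlgebra.ad F T S.b

/-- The linear form dual to `a`, read off from `⁅c, x⁆ = -α x • z`. -/
def α : Dual F T := -(S.ζ ∘ₗ LieAlgebra.ad F T S.c)

@[simp]
theorem z_lie (x : T) : ⁅S.z, x⁆ = 0 := by
  rw [← lie_skew, S.lie_z, neg_zero]

@[simp]
theorem lie_b_a : ⁅S.b, S.a⁆ = -S.c := by
  rw [← lie_skew, S.lie_a_b]

@[simp]
theorem lie_c_a : ⁅S.c, S.a⁆ = -S.z := by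
  rw [← lie_skew, S.lie_a_c]

@[simp]
theorem lie_c_b : ⁅S.c, S.b⁆ = 0 := by
  rw [← lie_skew, S.lie_b_c, neg_zero]

@[simp]
theorem α_frame : S.α S.a = 1 ∧ S.α S.b = 0 ∧ S.α S.c = 0 ∧ S.α S.z = 0 := by
  simp [α]

@[simp]
theorem γ_frame : S.γ S.a = 0 ∧ S.γ S.b = 0 ∧ S.γ S.c = 1 ∧ S.γ S.z = 0 := by
  simp [γ]

@[simp]
theorem β_frame : S.β S.a = 0 ∧ S.β S.b = 1 ∧ S.β S.c = 0 ∧ S.β S.z = 0 := by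
  simp [β]

@[simp]
theorem δ_frame : S.δ S.a = 0 ∧ S.δ S.b = 0 ∧ S.δ S.c = 0 ∧ S.δ S.z = 0 := by
  simp [δ]

theorem eq_of_mem_derived {t : T} (ht : t ∈ lowerCentralSeries F T T 1) :
    t = S.γ t • S.c + S.ζ t • S.z := by
  obtain ⟨p, q, rfl⟩ := Submodule.mem_span_pair.1 (S.derived_le_span ht)
  simp

theorem lie_eq (x y : T) : ⁅x, y⁆ = S.γ ⁅x, y⁆ • S.c + S.ζ ⁅x, y⁆ • S.z :=
  S.eq_of_mem_derived (lie_mem_lowerCentralSeries_one x y)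

@[simp]
theorem α_lie (x y : T) : S.α ⁅x, y⁆ = 0 := by rw [S.lie_eq]; simp

@[simp]
theorem δ_lie (x y : T) : S.δ ⁅x, y⁆ = 0 := by rw [S.lie_eq]; simp

theorem lie_a_eq (x : T) : ⁅S.a, x⁆ = S.β x • S.c + S.γ x • S.z :=
  S.lie_eq S.a x

theorem lie_c_eq (x : T) : ⁅S.c, x⁆ = -(S.α x • S.z) := by
  have hγ : S.γ ⁅S.c, x⁆ = 0 := by
    have : ⁅S.c, ⁅S.a, x⁆⁆ = 0 := by rw [S.lie_a_eq]; simp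
    change S.ζ ⁅S.a, ⁅S.c, x⁆⁆ = 0
    rw [leibniz_lie, this]
    simp
  rw [S.lie_eq S.c x, hγ]
  simp [α]

theorem lie_b_eq (x : T) : ⁅S.b, x⁆ = -(S.α x • S.c) + S.δ x • S.z := by
  have hγ : S.γ ⁅S.b, x⁆ = -S.α x := by
    have : ⁅S.b, ⁅S.a, x⁆⁆ = 0 := by rw [S.lie_a_eq]; simp
    change S.ζ ⁅S.a, ⁅S.b, x⁆⁆ = _
    rw [leibniz_lie, this, lie_a_b, lie_c_eq]
    simp
  rw [S.lie_eq S.b x, hγ, neg_smul]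
  rfl

/-- The centralizer of `a` and `c`. It contains `z` and is a linear complement of the span of
`a`, `b` and `c`. -/
def transversal : LieSubalgebra F T := lieCentralizer F {S.a, S.c}

theorem mem_transversal_iff {x : T} : x ∈ S.transversal ↔ ⁅S.a, x⁆ = 0 ∧ ⁅S.c, x⁆ = 0 :=
  mem_lieCentralizer_pair

theorem forms_eq_zero_of_mem_transversal {x : T} (hx : x ∈ S.transversal) :
    S.α x = 0 ∧ S.β x = 0 ∧ S.γ x = 0 := by
  obtain ⟨hax, hcx⟩ := S.mem_transversal_iff.1 hx
  simp [α, β, γ, hax, hcx]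

/-- The linear projection onto the transversal along the span of `a`, `b` and `c`. -/
def proj (x : T) : T := x - S.α x • S.a - S.β x • S.b - S.γ x • S.c

theorem proj_mem (x : T) : S.proj x ∈ S.transversal := by
  refine S.mem_transversal_iff.2 ⟨?_, ?_⟩
  · simp [proj, S.lie_a_eq x]
  · simp [proj, S.lie_c_eq x]

theorem lie_eq_smul_z {x y : T} (hx : S.α x = 0) (hy : S.α y = 0) :
    ⁅x, y⁆ = S.ζ ⁅x, y⁆ • S.z := by
  have hγ : S.γ ⁅x, y⁆ = 0 := by
    change S.ζ ⁅S.a, ⁅x, y⁆⁆ = 0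
    rw [leibniz_lie, S.lie_a_eq, S.lie_a_eq]
    simp [S.lie_c_eq, hx, hy, ← lie_skew x S.c]
  simpa [hγ] using S.lie_eq x y

theorem lie_eq_wedge (hK : IsLieAbelian S.transversal) (x y : T) :
    ⁅x, y⁆ = wedge S.α S.β x y • S.c + (wedge S.α S.γ + wedge S.β S.δ) x y • S.z := by
  have h : ⁅S.proj x, S.proj y⁆ = 0 :=
    isLieAbelian_subalgebra_iff.1 hK _ (S.proj_mem x) _ (S.proj_mem y)
  have lie_a : ⁅x, S.a⁆ = -⁅S.a, x⁆ := (lie_skew _ _).symm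
  have lie_b : ⁅x, S.b⁆ = -⁅S.b, x⁆ := (lie_skew _ _).symm
  have lie_c : ⁅x, S.c⁆ = -⁅S.c, x⁆ := (lie_skew _ _).symm
  simp only [proj, sub_lie, lie_sub, smul_lie, lie_smul, lie_self, lie_a, lie_b, lie_c, lie_a_b,
    lie_a_c, lie_b_a, lie_b_c, lie_c_a, lie_c_b, S.lie_a_eq x, S.lie_b_eq x, S.lie_c_eq x,
    S.lie_a_eq y, S.lie_b_eq y, S.lie_c_eq y] at h
  simp only [LinearMap.add_apply, wedge_apply]
  rw [← sub_eq_zero, ← h]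
  module

theorem γ_lie (hK : IsLieAbelian S.transversal) (x y : T) : S.γ ⁅x, y⁆ = wedge S.α S.β x y := by
  rw [S.lie_eq_wedge hK]
  simp

theorem ζ_lie (hK : IsLieAbelian S.transversal) (x y : T) :
    S.ζ ⁅x, y⁆ = (wedge S.α S.γ + wedge S.β S.δ) x y := by
  rw [S.lie_eq_wedge hK]
  simp

/-- The alternating form `α ∧ ζ + γ ∧ δ`. When the transversal is abelian it is closed, because
`d(α ∧ ζ) = -α ∧ β ∧ δ` cancels `d(γ ∧ δ) = α ∧ β ∧ δ`. -/
def cocycleForm : T →ₗ[F] T →ₗ[F] F :=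
  wedge S.α S.ζ + wedge S.γ S.δ

theorem cocycleForm_self (x : T) : S.cocycleForm x x = 0 := by
  simp only [cocycleForm, LinearMap.add_apply, wedge_apply]
  ring

theorem cocycleForm_lie (hK : IsLieAbelian S.transversal) (x y t : T) :
    S.cocycleForm x ⁅y, t⁆ = S.cocycleForm ⁅x, y⁆ t + S.cocycleForm y ⁅x, t⁆ := by
  simp only [cocycleForm, LinearMap.add_apply, wedge_apply, α_lie, δ_lie, S.γ_lie hK, S.ζ_lie hK]
  ring

/-- The form `α ∧ ζ + γ ∧ δ` as a 2-cocycle with trivial coefficients. -/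
def frameCocycle (hK : IsLieAbelian S.transversal) :
    twoCocycle F T (TrivialLieModule F T F) :=
  ⟨⟨S.cocycleForm.compr₂ (TrivialLieModule.equiv F T F).symm, S.cocycleForm_self⟩,
    (mem_twoCocycle_iff_of_trivial _ _ _ _).2 (S.cocycleForm_lie hK)⟩

theorem eq_smul_z_of_mem_center (hstem : LieAlgebra.center F T ≤ lowerCentralSeries F T T 1)
    {x : T} (hx : x ∈ LieAlgebra.center F T) : x = S.ζ x • S.z := by
  have hγ : S.γ x = 0 := by simp [γ, (mem_maxTrivSubmodule F T T x).1 hx S.a]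
  simpa [hγ] using S.eq_of_mem_derived (hstem hx)

theorem rank_le_five (hstem : LieAlgebra.center F T ≤ lowerCentralSeries F T T 1)
    (hK : IsLieAbelian S.transversal) : Module.rank F T ≤ 5 := by
  let φ : T →ₗ[F] (Fin 4 → F) := LinearMap.pi ![S.α, S.β, S.γ, S.δ]
  have hker : LinearMap.ker φ ≤ Submodule.span F {S.z} := by
    intro x hx
    have hα : S.α x = 0 := congrFun hx 0
    have hβ : S.β x = 0 := congrFun hx 1
    have hγ : S.γ x = 0 := congrFun hx 2
    have hδ : S.δ x = 0 := congrFun hx 3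
    have hcenter : x ∈ LieAlgebra.center F T := by
      rw [mem_maxTrivSubmodule]
      intro y
      simp [S.lie_eq_wedge hK, hα, hβ, hγ, hδ]
    exact Submodule.mem_span_singleton.2 ⟨S.ζ x, (S.eq_smul_z_of_mem_center hstem hcenter).symm⟩
  have hrank_ker : Module.rank F (LinearMap.ker φ) ≤ 1 :=
    (Submodule.rank_mono hker).trans (by simpa using rank_span_le {S.z})
  have hrank_quotient : Module.rank F (T ⧸ LinearMap.ker φ) ≤ 4 := by
    have hinj : Injective ((LinearMap.ker φ).liftQ φ le_rfl) :=
      LinearMap.ker_eq_bot.1 (Submodule.ker_liftQ_eq_bot' _ _ rfl)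
    simpa using LinearMap.lift_rank_le_of_injective _ hinj
  calc Module.rank F T
      = Module.rank F (T ⧸ LinearMap.ker φ) + Module.rank F (LinearMap.ker φ) :=
        (LinearMap.ker φ).rank_quotient_add_rank.symm
    _ ≤ 4 + 1 := add_le_add hrank_quotient hrank_ker
    _ = 5 := by norm_num

theorem six_le_rank (hK : ¬ IsLieAbelian S.transversal) : 6 ≤ Module.rank F T := by
  simp only [isLieAbelian_subalgebra_iff, not_forall] at hK
  obtain ⟨x, hx, y, hy, hxy⟩ := hK
  obtain ⟨hαx, hβx, hγx⟩ := S.forms_eq_zero_of_mem_transversal hx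
  obtain ⟨hαy, hβy, hγy⟩ := S.forms_eq_zero_of_mem_transversal hy
  suffices LinearIndependent F ![S.a, S.b, S.c, x, y, S.z] by
    simpa using this.cardinal_lift_le_rank
  rw [Fintype.linearIndependent_iff]
  intro g hg
  simp only [Fin.sum_univ_six, Matrix.cons_val] at hg
  have h0 : g 0 = 0 := by simpa [hαx, hαy] using congrArg S.α hg
  have h1 : g 1 = 0 := by simpa [hβx, hβy] using congrArg S.β hg
  have h2 : g 2 = 0 := by simpa [hγx, hγy] using congrArg S.γ hg
  simp only [h0, h1, h2, zero_smul, zero_add] at hg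
  have h4 : g 4 = 0 := by simpa [hxy] using congrArg (⁅x, ·⁆) hg
  have h3 : g 3 = 0 := by simpa [hxy] using congrArg (⁅·, y⁆) hg
  have h5 : g 5 = 0 := by simpa [h3, h4] using congrArg S.ζ hg
  intro i
  fin_cases i <;> assumption

theorem twoCocycle_apply_z_eq_zero {M : Type*} [AddCommGroup M] [Module F M] [LieRingModule T M]
    [LieModule F T M] [LieModule.IsTrivial T M] (f : twoCocycle F T M)
    (hK : ¬ IsLieAbelian S.transversal) : f.1 S.z = 0 := by
  simp only [isLieAbelian_subalgebra_iff, not_forall] at hK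
  obtain ⟨x, hx, y, hy, hxy⟩ := hK
  obtain ⟨hax, hcx⟩ := S.mem_transversal_iff.1 hx
  obtain ⟨hay, hcy⟩ := S.mem_transversal_iff.1 hy
  have hlie : ⁅x, y⁆ = S.ζ ⁅x, y⁆ • S.z :=
    S.lie_eq_smul_z (S.forms_eq_zero_of_mem_transversal hx).1
      (S.forms_eq_zero_of_mem_transversal hy).1
  have hζ : S.ζ ⁅x, y⁆ ≠ 0 := fun h ↦ hxy (by rw [hlie, h, zero_smul])
  have apply_z_of_commute {w : T} (hx : ⁅w, x⁆ = 0) (hy : ⁅w, y⁆ = 0) : f.1 w S.z = 0 := by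
    have := twoCocycle_apply_lie_eq_zero f hx hy
    rw [hlie, map_smul] at this
    exact (smul_eq_zero.1 this).resolve_left hζ
  have haz : f.1 S.a S.z = 0 := apply_z_of_commute hax hay
  have hzc : f.1 S.z S.c = 0 := by
    rw [← twoCochain_skew, apply_z_of_commute hcx hcy, neg_zero]
  have apply_z_of_α_eq_zero {u : T} (hu : S.α u = 0) : f.1 u S.z = 0 := by
    have hua : ⁅u, S.a⁆ = -(S.β u • S.c + S.γ u • S.z) := by rw [← S.lie_a_eq, lie_skew]
    have huc : ⁅u, S.c⁆ = 0 := by rw [← lie_skew, S.lie_c_eq, hu, zero_smul, neg_zero, neg_zero]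
    rw [← S.lie_a_c, (mem_twoCocycle_iff_of_trivial _ _ _ _).1 f.2, hua, huc]
    simp [twoCochain_alt, hzc]
  ext u
  have hu : S.α (u - S.α u • S.a) = 0 := by simp
  have := apply_z_of_α_eq_zero hu
  rw [map_sub, map_smul, LinearMap.sub_apply, LinearMap.smul_apply, haz, smul_zero,
    sub_zero] at this
  rw [← twoCochain_skew, this, neg_zero, LinearMap.zero_apply]

theorem z_ne_zero : S.z ≠ 0 := fun h ↦ by simpa [h] using S.ζ_z

end Forms

section Capability

variable {F T : Type u} [Field F] [LieRing T] [LieAlgebra F T] (S : AdaptedFrame F T)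

theorem isCapable (hstem : LieAlgebra.center F T ≤ lowerCentralSeries F T T 1)
    (hK : IsLieAbelian S.transversal) : IsCapable F T := by
  refine isCapable_of_twoCocycle (S.frameCocycle hK) fun x hx hfx ↦ ?_
  have hxz : x = S.ζ x • S.z := S.eq_smul_z_of_mem_center hstem hx
  have h : S.cocycleForm x S.a = 0 := LinearMap.congr_fun hfx S.a
  have hζ : S.ζ x = 0 := by
    rw [hxz] at h
    simpa [cocycleForm] using h
  rw [hxz, hζ, zero_smul]

theorem not_isCapable (hK : ¬ IsLieAbelian S.transversal) : ¬ IsCapable F T := fun h ↦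
  have ⟨_, _, _, f, hf⟩ := h.exists_twoCocycle
  S.z_ne_zero (hf _ (S.twoCocycle_apply_z_eq_zero f hK))

end Capability

end AdaptedFrame

theorem stem_class_three_not_capable_iff_dim_ge_six_general
    (F T : Type u) [Field F] [LieRing T] [LieAlgebra F T]
    (hclass : LieModule.lowerCentralSeries F T T 2 ≠ ⊥ ∧ LieModule.lowerCentralSeries F T T 3 = ⊥)
    (hder : finrank F ↥(LieModule.lowerCentralSeries F T T 1) = 2)
    (hstem : LieAlgebra.center F T ≤ LieModule.lowerCentralSeries F T T 1) :
    ¬ IsCapable F T ↔ 6 ≤ Module.rank F T := by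
  obtain ⟨S⟩ := AdaptedFrame.nonempty hclass.1 hclass.2 hder
  by_cases hK : IsLieAbelian S.transversal
  · have hrank : ¬ 6 ≤ Module.rank F T := by
      refine not_le.2 ((S.rank_le_five hstem hK).trans_lt ?_)
      norm_num
    exact iff_of_false (not_not.2 (S.isCapable hstem hK)) hrank
  · exact iff_of_true (S.not_isCapable hK) (S.six_le_rank hK)

/-- A finite-dimensional stem nilpotent Lie algebra of class 3 with 2-dimensional derived
subalgebra is non-capable iff its dimension is at least 6. -/
theorem stem_class_three_not_capable_iff_dim_ge_six
    (F T : Type u) [Field F] [LieRing T] [LieAlgebra F T] [FiniteDimensional F T]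
    (hclass : LieModule.lowerCentralSeries F T T 2 ≠ ⊥ ∧ LieModule.lowerCentralSeries F T T 3 = ⊥)
    (hder : finrank F ↥(LieModule.lowerCentralSeries F T T 1) = 2)
    (hstem : LieAlgebra.center F T ≤ LieModule.lowerCentralSeries F T T 1) :
    ¬ IsCapable F T ↔ 6 ≤ finrank F T := by
  rw [stem_class_three_not_capable_iff_dim_ge_six_general F T hclass hder hstem,
    ← finrank_eq_rank, Nat.ofNat_le_cast]
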